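/- For every ε > 0 there exist a number of agents n, finite response spaces X_j each containing an opt-out value ⊥, an ε-differentially private mechanism M, a post-processing function f : O → C with C finite, an agent j, an environment x₋ⱼ, and a hyperreal-valued utility function u : C → ℝ* (the hyperreal numbers) such that for every real reward r ∈ ℝ and every response a ∈ X_j with a ≠ ⊥: (r : ℝ*) + Σ_{c∈C} u(c)·(P(f(M(a, x₋ⱼ)) = c) : ℝ*) < Σ_{c∈C} u(c)·(P(f(M(⊥, x₋ⱼ)) = c) : ℝ*). In particular, no real-valued payment scheme can induce agent j to participate. -/

import Mathlib

open scoped ENNReal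

/-- Two inputs of a product space are neighboring if they differ in exactly one coordinate. -/
def Neighboring {n : ℕ} {X : Fin n → Type*} (x x' : ∀ j, X j) : Prop :=
  ∃ j : Fin n, x j ≠ x' j ∧ ∀ i : Fin n, i ≠ j → x i = x' i

/-- `M` satisfies `(ε,δ)`-differential privacy. -/
def IsDP {n : ℕ} {X : Fin n → Type*} {O : Type*}
    (M : (∀ j, X j) → PMF O) (ε δ : ℝ) : Prop :=
  ∀ x x' : ∀ j, X j, Neighboring x x' → ∀ S : Set O,
    (M x).toOuterMeasure S ≤
      ENNReal.ofReal (Real.exp ε) * (M x').toOuterMeasure S + ENNReal.ofReal δ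

/-! Randomized response makes the outcome `⊥` strictly more likely when an agent opts out than under
any other report, by a real margin. If the agent values the outcome `⊥` at a positive unlimited `ω`
and every other outcome at `0`, participating costs `ω` times that margin, which exceeds every real
reward. -/

lemma IsDP.of_apply_le {n : ℕ} {X : Fin n → Type*} {O : Type*} {M : (∀ j, X j) → PMF O} {ε : ℝ}
    (h : ∀ x x', Neighboring x x' → ∀ o, M x o ≤ ENNReal.ofReal (Real.exp ε) * M x' o) :
    IsDP M ε 0 := by
  intro x x' hxx' S
  rw [ENNReal.ofReal_zero, add_zero, PMF.toOuterMeasure_apply, PMF.toOuterMeasure_apply,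
    ← ENNReal.tsum_mul_left]
  refine ENNReal.tsum_le_tsum fun o => ?_
  rw [← Set.indicator_const_mul]
  exact Set.indicator_le_indicator (h x x' hxx' o)

section RandomizedResponse

variable {α : Type*}

lemma exp_add_card_sub_one_pos [Fintype α] [Nonempty α] (ε : ℝ) :
    0 < Real.exp ε + ((Fintype.card α : ℝ) - 1) :=
  add_pos_of_pos_of_nonneg (Real.exp_pos ε) (sub_nonneg.mpr (Nat.one_le_cast.mpr Fintype.card_pos))

variable [DecidableEq α]

/-- The unnormalized probability that randomized response reports `b` when the true value is `a`. -/
noncomputable def responseWeight (ε : ℝ) (a b : α) : ℝ :=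
  if b = a then Real.exp ε else 1

lemma responseWeight_self (ε : ℝ) (a : α) : responseWeight ε a a = Real.exp ε :=
  if_pos rfl

lemma responseWeight_of_ne (ε : ℝ) {a b : α} (hba : b ≠ a) : responseWeight ε a b = 1 :=
  if_neg hba

lemma responseWeight_pos (ε : ℝ) (a b : α) : 0 < responseWeight ε a b := by
  unfold responseWeight
  positivity

lemma responseWeight_le_exp {ε : ℝ} (hε : 0 ≤ ε) (a b : α) :
    responseWeight ε a b ≤ Real.exp ε := by
  unfold responseWeight
  split_ifs
  exacts [le_rfl, Real.one_le_exp hε]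

lemma one_le_responseWeight {ε : ℝ} (hε : 0 ≤ ε) (a b : α) : 1 ≤ responseWeight ε a b := by
  unfold responseWeight
  split_ifs
  exacts [Real.one_le_exp hε, le_rfl]

lemma responseWeight_le_exp_mul {ε : ℝ} (hε : 0 ≤ ε) (a a' b : α) :
    responseWeight ε a b ≤ Real.exp ε * responseWeight ε a' b :=
  (responseWeight_le_exp hε a b).trans
    (le_mul_of_one_le_right (Real.exp_pos ε).le (one_le_responseWeight hε a' b))

variable [Fintype α]

lemma sum_responseWeight (ε : ℝ) (a : α) :
    ∑ b, responseWeight ε a b = Real.exp ε + (Fintype.card α - 1) := by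
  have off_diagonal : ∑ b ∈ Finset.univ.erase a, responseWeight ε a b = Fintype.card α - 1 := by
    rw [Finset.sum_congr rfl fun b hb => responseWeight_of_ne ε (Finset.ne_of_mem_erase hb),
      Finset.sum_const, nsmul_one, Finset.cast_card_erase_of_mem (Finset.mem_univ a),
      Finset.card_univ]
  rw [← Finset.add_sum_erase _ _ (Finset.mem_univ a), responseWeight_self, off_diagonal]

/-- Randomized response on a finite type: the true value `a` is reported with probability
`e ^ ε / (e ^ ε + |α| - 1)` and every other value with probability `1 / (e ^ ε + |α| - 1)`. -/
noncomputable def randomizedResponse (ε : ℝ) (a : α) : PMF α :=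
  PMF.ofFintype
    (fun b => ENNReal.ofReal (responseWeight ε a b / (Real.exp ε + (Fintype.card α - 1)))) <| by
    have : Nonempty α := ⟨a⟩
    have hZ := exp_add_card_sub_one_pos (α := α) ε
    rw [← ENNReal.ofReal_sum_of_nonneg fun b _ => div_nonneg (responseWeight_pos ε a b).le hZ.le,
      ← Finset.sum_div, sum_responseWeight, div_self hZ.ne', ENNReal.ofReal_one]

lemma randomizedResponse_apply (ε : ℝ) (a b : α) :
    randomizedResponse ε a b =
      ENNReal.ofReal (responseWeight ε a b / (Real.exp ε + (Fintype.card α - 1))) :=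
  rfl

lemma randomizedResponse_apply_le {ε : ℝ} (hε : 0 ≤ ε) (a a' b : α) :
    randomizedResponse ε a b ≤ ENNReal.ofReal (Real.exp ε) * randomizedResponse ε a' b := by
  have : Nonempty α := ⟨a⟩
  have hZ := exp_add_card_sub_one_pos (α := α) ε
  rw [randomizedResponse_apply, randomizedResponse_apply,
    ← ENNReal.ofReal_mul (Real.exp_pos ε).le, ← mul_div_assoc]
  gcongr
  exact responseWeight_le_exp_mul hε a a' b

lemma randomizedResponse_apply_lt_apply_self {ε : ℝ} (hε : 0 < ε) {a b : α} (hab : a ≠ b) :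
    randomizedResponse ε a b < randomizedResponse ε b b := by
  have : Nonempty α := ⟨a⟩
  have hZ := exp_add_card_sub_one_pos (α := α) ε
  rw [randomizedResponse_apply, randomizedResponse_apply, responseWeight_self,
    responseWeight_of_ne ε hab.symm, ENNReal.ofReal_lt_ofReal_iff (by positivity)]
  gcongr
  exact Real.one_lt_exp_iff.mpr hε

lemma isDP_randomizedResponse_coordinate {n : ℕ} {X : Fin n → Type*} {j : Fin n} [Fintype (X j)]
    [DecidableEq (X j)] {ε : ℝ} (hε : 0 ≤ ε) :
    IsDP (fun x : ∀ i, X i => randomizedResponse ε (x j)) ε 0 :=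
  IsDP.of_apply_le fun x x' _ => randomizedResponse_apply_le hε (x j) (x' j)

end RandomizedResponse

section ExpectedUtility

variable {C : Type*} [Fintype C]

/-- The expected utility of a hyperreal-valued utility function `u` when the consequence has
distribution `p`; the real probabilities are coerced to hyperreals. -/
noncomputable def expectedUtility (u : C → Hyperreal) (p : PMF C) : Hyperreal :=
  ∑ c, u c * ((p c).toReal : Hyperreal)

lemma expectedUtility_single [DecidableEq C] (c : C) (w : Hyperreal) (p : PMF C) :
    expectedUtility (Pi.single c w) p = w * ((p c).toReal : Hyperreal) :=
  single_dotProduct _ _ _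

lemma coe_add_mul_lt_mul_of_unlimited {ω : Hyperreal} (hω : ∀ r : ℝ, (r : Hyperreal) < ω)
    {s t : ℝ} (hst : s < t) (r : ℝ) : (r : Hyperreal) + ω * s < ω * t := by
  have hr : (r : Hyperreal) < ω * ((t - s : ℝ) : Hyperreal) := by
    rw [← div_lt_iff₀ (Hyperreal.coe_pos.mpr (sub_pos.mpr hst)), ← Hyperreal.coe_div]
    exact hω (r / (t - s))
  rwa [Hyperreal.coe_sub, mul_sub, lt_sub_iff_add_lt] at hr

lemma coe_add_expectedUtility_single_lt_of_unlimited [DecidableEq C] {ω : Hyperreal}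
    (hω : ∀ r : ℝ, (r : Hyperreal) < ω) {c : C} {p q : PMF C} (hpq : p c < q c) (r : ℝ) :
    (r : Hyperreal) + expectedUtility (Pi.single c ω) p < expectedUtility (Pi.single c ω) q := by
  rw [expectedUtility_single, expectedUtility_single]
  exact coe_add_mul_lt_mul_of_unlimited hω (ENNReal.toReal_strict_mono (q.apply_ne_top c) hpq) r

end ExpectedUtility

theorem stmt11_general {ε : ℝ} (hε : 0 < ε) {n : ℕ} {X : Fin n → Type*} (j : Fin n)
    [Fintype (X j)] (bot : X j) :
    ∃ (M : (∀ i, X i) → PMF (X j)) (u : X j → Hyperreal),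
      IsDP M ε 0 ∧
      ∀ (x : ∀ i, X i) (r : ℝ) (a : X j), a ≠ bot →
        (r : Hyperreal) + expectedUtility u (M (Function.update x j a)) <
          expectedUtility u (M (Function.update x j bot)) := by
  classical
  refine ⟨fun x => randomizedResponse ε (x j), Pi.single bot Hyperreal.omega,
    isDP_randomizedResponse_coordinate hε.le, fun x r a ha => ?_⟩
  simp only [Function.update_self]
  exact coe_add_expectedUtility_single_lt_of_unlimited Hyperreal.coe_lt_omega
    (randomizedResponse_apply_lt_apply_self hε ha) r

/-- for every `ε > 0` there exist a number of agents `n`, finite response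
spaces `X j` each with an opt-out value `bot j`, an `ε`-DP mechanism `M`, a post-processor
`f` into a finite consequence space, an agent `j`, an environment (encoded by `x`), and a
hyperreal-valued utility function `u : C → ℝ*` such that for every real reward `r` and
every non-opt-out report `a`, the reward plus the expected hyperreal utility of reporting
`a` is strictly less than the expected hyperreal utility of opting out: no real-valued
payment scheme can induce participation. -/
theorem stmt11 (ε : ℝ) (hε : 0 < ε) :
    ∃ (n : ℕ) (X : Fin n → Type) (_ : ∀ j, Fintype (X j)) (bot : ∀ j, X j)
      (O : Type) (M : (∀ j, X j) → PMF O)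
      (C : Type) (instC : Fintype C) (f : O → C) (u : C → Hyperreal)
      (j : Fin n) (x : ∀ i, X i),
      IsDP M ε 0 ∧
      ∀ (r : ℝ) (a : X j), a ≠ bot j →
        (r : Hyperreal) + ∑ c ∈ @Finset.univ C instC,
            u c * ((((M (Function.update x j a)).map f) c).toReal : Hyperreal) <
          ∑ c ∈ @Finset.univ C instC,
            u c * ((((M (Function.update x j (bot j))).map f) c).toReal : Hyperreal) := by
  obtain ⟨M, u, hM, hu⟩ := stmt11_general hε (X := fun _ : Fin 1 => Bool) 0 false
  exact ⟨1, _, fun _ => inferInstance, fun _ => false, Bool, M, Bool, inferInstance, id, u, 0,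
    fun _ => false, hM, by simpa only [PMF.map_id, expectedUtility] using hu _⟩
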